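/- Let ℓ : ℝ → [0,∞) be an L-Lipschitz loss function with ℓ(0) = 0, 0 < δ < 1, p ∈ (1,2], W > 0, and let 𝒟_X and 𝒟_Y be distributions over ℝ^d and ℝ respectively with E[‖X‖₁] < ∞ and E[|Y|] < ∞; let 𝒟 = 𝒟_X × 𝒟_Y and ℱ_W = {(x,y) ↦ ℓ(⟨w,x⟩ − y) : w ∈ ℝ^d, ‖w‖₂ ≤ W}. Suppose ∞ > v_p ≥ (2L)^p·(sup_{‖w‖₂≤W} E[|⟨w,X⟩|^p] + E[|Y|^p]). Then for ε > 0, if m ≥ (400·16^p·v_p/ε^p)^{1/(p−1)} and κ ≥ max{κ₀(δ/8), 10⁶·ln(2)/99, 50·ln(8·N(ε/16, m)/δ)}, where κ₀(δ) = 4·1250²·ln(e/δ), N(ε, m) = (6W/β(ε,m,𝒟))^d, and β(ε,m,𝒟) = min(W/2, ε/(60000·L·(E[‖X‖₁] + E[|Y|])·m)), then with probability at least 1 − δ over Z = (X,Y) ∼ (𝒟^m)^κ, for all f ∈ ℱ_W it holds that |MoM(f, Z) − E_{Z'∼𝒟}[f(Z')]| ≤ ε. -/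

import Mathlib

/-!
The proof is a union bound over a net, with one extra event that controls the discretisation.

* Single function. A loss `f` in the class is nonnegative with `p`-th moment at most `v / 2`
  (`linLoss_moment`). Truncating `f` at level `m ε / 2` and using Chebyshev's inequality for the
  truncation and Markov's inequality for the excess shows that a block mean deviates from `E[f]` by
  more than `ε / 2` with probability at most `1/48` (`measure_blockMean_deviation_le`); the lower
  bound on `m` is what makes the truncation errors small.
* Boosting. If each block is bad with probability at most `1/48`, a quarter of the `κ` blocks is bad
  with probability at most `exp (-κ/4)` (`measure_quarter_bad_le`).
* Discretisation. The ball of radius `W` has a `β`-net of at most `(6 W / β) ^ d` points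
  (`exists_net`). Replacing `w` by a net point at distance at most `β` changes the block mean by at
  most `L β` times the block mean of `‖x‖₁`. The latter exceeds `48 (E‖X‖₁ + E|Y|)` on a quarter of
  the blocks with probability at most `exp (-κ/4)` only, and this event does not depend on `w`.

Outside these events fewer than half of the blocks are bad for any given `w`, so the median is within
`ε` of the expectation (`abs_median_sub_le`); the lower bounds on `κ` make the total failure
probability at most `δ` (`uniform_of_net`). Two degenerate cases are separate: `m = 0`, where `v = 0`
and every loss vanishes almost everywhere, and `L (E‖X‖₁ + E|Y|) = 0`, where the division by zero in
the stated covering number can make that hypothesis void but the net `{0}` suffices.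
-/

open MeasureTheory

/-- The median of `κ` real numbers: the `((κ+1)/2)`-th smallest if `κ` is odd and the
`(κ/2)`-th smallest if `κ` is even (both given by the zero-based index `(κ-1)/2`). -/
noncomputable def median {κ : ℕ} (a : Fin κ → ℝ) : ℝ :=
  ((List.ofFn a).mergeSort fun x y => decide (x ≤ y)).getD ((κ - 1) / 2) 0

/-- Sample mean of `f` on a block of `m` points. -/
noncomputable def blockMean {𝒳 : Type*} {m : ℕ} (f : 𝒳 → ℝ) (x : Fin m → 𝒳) : ℝ :=
  (∑ j, f (x j)) / m

/-- The Median-of-Means estimator on a sample of `κ` blocks of `m` points. -/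
noncomputable def mom {𝒳 : Type*} {m κ : ℕ} (f : 𝒳 → ℝ) (X : Fin κ → Fin m → 𝒳) : ℝ :=
  median fun i => blockMean f (X i)

/-- The class `ℱ_W` of losses of norm-constrained linear predictors:
`(x, y) ↦ ℓ(⟨w, x⟩ - y)` for `‖w‖₂ ≤ W`. -/
def linRegClass (d : ℕ) (ℓ : ℝ → ℝ) (W : ℝ) : Set (EuclideanSpace ℝ (Fin d) × ℝ → ℝ) :=
  {f | ∃ w : EuclideanSpace ℝ (Fin d), ‖w‖ ≤ W ∧ f = fun z => ℓ ((∑ i, w i * z.1 i) - z.2)}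

/-! ### Medians and block means -/

/-- If more than half of the values lie within `ε` of `c`, so does their median. -/
lemma abs_median_sub_le {κ : ℕ} (a : Fin κ → ℝ) (c ε : ℝ)
    (h : 2 * (Finset.univ.filter fun i => ¬ |a i - c| ≤ ε).card < κ) :
    |median a - c| ≤ ε := by
  set s := (List.ofFn a).mergeSort fun x y => decide (x ≤ y) with hs
  have hlen : s.length = κ := by simp [hs]
  have hsort : s.Pairwise (· ≤ ·) := List.pairwise_mergeSort' (r := (· ≤ ·)) _
  have hperm : s.Perm (List.ofFn a) := List.mergeSort_perm _ _
  -- the number of far values can be counted along the sorted list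
  have hcount : (Finset.univ.filter fun i => ¬ |a i - c| ≤ ε).card
      = (Finset.univ.filter fun i : Fin s.length => ¬ |s.get i - c| ≤ ε).card := by
    have h1 : ∀ (n : ℕ) (b : Fin n → ℝ),
        (Finset.univ.filter fun i => ¬ |b i - c| ≤ ε).card
          = (List.ofFn b).countP fun x => decide (¬ |x - c| ≤ ε) := by
      intro n b
      rw [List.ofFn_eq_map, List.countP_map, List.countP_eq_length_filter]
      rfl
    rw [h1, h1, List.ofFn_get, hperm.countP_eq]
  have hr : (κ - 1) / 2 < s.length := by omega
  have hmed : median a = s[(κ - 1) / 2] := by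
    simp [median, ← hs, hr]
  have hmono : ∀ i j : Fin s.length, i ≤ j → s.get i ≤ s.get j := fun i j hij =>
    hsort.sortedLE.monotone_get hij
  rw [hcount] at h
  rw [hmed]
  by_contra hcon
  rw [not_le, lt_abs] at hcon
  rcases hcon with hcon | hcon
  · have hsub : (Finset.Ici (⟨(κ - 1) / 2, hr⟩ : Fin s.length)) ⊆
        Finset.univ.filter fun i : Fin s.length => ¬ |s.get i - c| ≤ ε := by
      intro i hi
      have := hmono _ _ (Finset.mem_Ici.1 hi)
      simp only [Finset.mem_filter, Finset.mem_univ, true_and, not_le, lt_abs]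
      left
      simp only [List.get_eq_getElem] at this ⊢
      linarith
    have := Finset.card_le_card hsub
    simp only [Fin.card_Ici] at this
    omega
  · have hsub : (Finset.Iic (⟨(κ - 1) / 2, hr⟩ : Fin s.length)) ⊆
        Finset.univ.filter fun i : Fin s.length => ¬ |s.get i - c| ≤ ε := by
      intro i hi
      have := hmono _ _ (Finset.mem_Iic.1 hi)
      simp only [Finset.mem_filter, Finset.mem_univ, true_and, not_le, lt_abs]
      right
      simp only [List.get_eq_getElem] at this ⊢
      linarith
    have := Finset.card_le_card hsub
    simp only [Fin.card_Iic] at this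
    omega

open scoped Classical in
/-- Chernoff-type bound: if a block is bad with probability at most `1/48`, then a quarter of
`κ` independent blocks is bad with probability at most `exp (-κ/4)`. It is a union bound over the
at most `2 ^ κ ≤ 16 ^ ⌈κ/4⌉` possible sets of bad blocks. -/
lemma measure_quarter_bad_le {Ω : Type*} [MeasurableSpace Ω] (μ : Measure Ω)
    [IsProbabilityMeasure μ] (κ : ℕ) (B : Set Ω) (hB : μ B ≤ ENNReal.ofReal (1 / 48)) :
    (Measure.pi fun _ : Fin κ => μ)
        {Z | κ ≤ 4 * (Finset.univ.filter fun i => Z i ∈ B).card}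
      ≤ ENNReal.ofReal (Real.exp (-(κ / 4))) := by
  set k := (κ + 3) / 4 with hk
  set T := (Finset.univ : Finset (Finset (Fin κ))).filter fun S => k ≤ S.card with hT
  have hsub : {Z : Fin κ → Ω | κ ≤ 4 * (Finset.univ.filter fun i => Z i ∈ B).card} ⊆
      ⋃ S ∈ T, Set.univ.pi fun i => if i ∈ S then B else Set.univ := by
    intro Z hZ
    have hZ' : κ ≤ 4 * (Finset.univ.filter fun i => Z i ∈ B).card := hZ
    refine Set.mem_biUnion (x := Finset.univ.filter fun i => Z i ∈ B) ?_ ?_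
    · simp only [hT, Finset.coe_filter, Finset.mem_univ, true_and, Set.mem_ofPred_eq]
      omega
    · intro i _
      by_cases h : Z i ∈ B <;> simp [h]
  have hS : ∀ S ∈ T, (Measure.pi fun _ : Fin κ => μ)
      (Set.univ.pi fun i => if i ∈ S then B else Set.univ) ≤ ENNReal.ofReal ((1 / 48) ^ k) := by
    intro S hS
    have hc : k ≤ S.card := (Finset.mem_filter.1 hS).2
    rw [Measure.pi_pi]
    calc ∏ i, μ (if i ∈ S then B else Set.univ)
        = ∏ i, (if i ∈ S then μ B else 1) := by
          refine Finset.prod_congr rfl fun i _ => ?_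
          split_ifs <;> simp
      _ = μ B ^ S.card := by simp [Finset.prod_ite_mem]
      _ ≤ ENNReal.ofReal (1 / 48) ^ S.card := by gcongr
      _ = ENNReal.ofReal ((1 / 48) ^ S.card) := by rw [ENNReal.ofReal_pow (by norm_num)]
      _ ≤ _ := ENNReal.ofReal_le_ofReal
          (pow_le_pow_of_le_one (by norm_num) (by norm_num) hc)
  have hexp : (1 / 3 : ℝ) ≤ Real.exp (-1) := by
    rw [Real.exp_neg, one_div]
    exact inv_anti₀ (Real.exp_pos 1) (by linarith [Real.exp_one_lt_d9])
  calc _ ≤ ∑ S ∈ T, (Measure.pi fun _ : Fin κ => μ)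
        (Set.univ.pi fun i => if i ∈ S then B else Set.univ) :=
        (measure_mono hsub).trans (measure_biUnion_finset_le _ _)
    _ ≤ ∑ S ∈ T, ENNReal.ofReal ((1 / 48) ^ k) := Finset.sum_le_sum hS
    _ = ENNReal.ofReal (T.card * (1 / 48) ^ k) := by
        rw [Finset.sum_const, nsmul_eq_mul, ENNReal.ofReal_mul (by positivity)]
        simp
    _ ≤ _ := by
        apply ENNReal.ofReal_le_ofReal
        have h1 : (T.card : ℝ) ≤ 16 ^ k := by
          have : T.card ≤ 2 ^ κ := by
            simpa using Finset.card_le_univ T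
          have h2 : 2 ^ κ ≤ 16 ^ k := by
            rw [show (16 : ℕ) = 2 ^ 4 by norm_num, ← pow_mul]
            exact Nat.pow_le_pow_right (by norm_num) (by omega)
          exact_mod_cast this.trans h2
        have hkκ : (κ : ℝ) / 4 ≤ k := by
          have : κ ≤ 4 * k := by omega
          have : (κ : ℝ) ≤ 4 * k := by exact_mod_cast this
          linarith
        calc (T.card : ℝ) * (1 / 48) ^ k ≤ 16 ^ k * (1 / 48) ^ k := by gcongr
          _ = (1 / 3) ^ k := by rw [← mul_pow]; norm_num
          _ ≤ Real.exp (-1) ^ k := by gcongr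
          _ = Real.exp (-k) := by rw [← Real.exp_nat_mul]; simp
          _ ≤ _ := Real.exp_le_exp.2 (by linarith)

/-- Markov's inequality for the mean of a block of i.i.d. nonnegative variables. -/
lemma measure_le_blockMean_le {𝒳 : Type*} [MeasurableSpace 𝒳] (ν : Measure 𝒳)
    [IsProbabilityMeasure ν] {m : ℕ} (hm : 0 < m) (h : 𝒳 → ℝ) (h0 : ∀ x, 0 ≤ h x)
    (hi : Integrable h ν) (T q : ℝ) (hT : 0 < T) (hq : ∫ x, h x ∂ν ≤ q * T) :
    (Measure.pi fun _ : Fin m => ν) {x | T ≤ blockMean h x} ≤ ENNReal.ofReal q := by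
  have hij : ∀ j : Fin m, Integrable (fun x : Fin m → 𝒳 => h (x j))
      (Measure.pi fun _ : Fin m => ν) := fun j =>
    (measurePreserving_eval (fun _ : Fin m => ν) j).integrable_comp_of_integrable hi
  have hintegrable : Integrable (fun x : Fin m → 𝒳 => blockMean h x)
      (Measure.pi fun _ : Fin m => ν) := by
    unfold blockMean
    exact (integrable_finsetSum _ fun j _ => hij j).div_const _
  have hval : ∫ x, blockMean h x ∂(Measure.pi fun _ : Fin m => ν) = ∫ x, h x ∂ν := by
    unfold blockMean
    rw [integral_div, integral_finsetSum _ fun j _ => hij j]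
    have : ∀ j : Fin m, ∫ x, h (x j) ∂(Measure.pi fun _ : Fin m => ν) = ∫ x, h x ∂ν := fun j =>
      integral_comp_eval (μ := fun _ : Fin m => ν) hi.aestronglyMeasurable
    simp only [this, Finset.sum_const, Finset.card_univ, Fintype.card_fin, nsmul_eq_mul]
    field_simp
  have hmk := mul_meas_ge_le_integral_of_nonneg
    (Filter.Eventually.of_forall fun x => by
      unfold blockMean
      exact div_nonneg (Finset.sum_nonneg fun j _ => h0 _) (Nat.cast_nonneg m)) hintegrable T
  rw [hval] at hmk
  have : (Measure.pi fun _ : Fin m => ν).real {x | T ≤ blockMean h x} ≤ q := by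
    have := hmk.trans hq
    rw [mul_comm] at this
    exact le_of_mul_le_mul_right this hT
  rw [← ofReal_measureReal]
  exact ENNReal.ofReal_le_ofReal this

/-- Concentration of a block mean under a `p`-th moment bound, `1 < p ≤ 2`. The function is
truncated at level `τ = m t`: the truncated part is handled by Chebyshev's inequality, the excess
over the truncation level by Markov's inequality. -/
lemma measure_blockMean_deviation_le {𝒳 : Type*} [MeasurableSpace 𝒳] (ν : Measure 𝒳)
    [IsProbabilityMeasure ν] {m : ℕ} (hm : 0 < m) (f : 𝒳 → ℝ) (hf0 : ∀ x, 0 ≤ f x)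
    (hfm : Measurable f) (hfi : Integrable f ν) (p : ℝ) (hp1 : 1 < p) (hp2 : p ≤ 2)
    (hfp : Integrable (fun x => f x ^ p) ν) (t : ℝ) (ht : 0 < t)
    (hmom : 384 * ∫ x, f x ^ p ∂ν ≤ t ^ p * (m : ℝ) ^ (p - 1)) :
    (Measure.pi fun _ : Fin m => ν) {x | ¬ |blockMean f x - ∫ z, f z ∂ν| ≤ t}
      ≤ ENNReal.ofReal (1 / 48) := by
  have hm' : (0 : ℝ) < m := by exact_mod_cast hm
  set τ : ℝ := m * t with hτ
  have hτ0 : 0 < τ := by positivity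
  set c : ℝ := τ ^ (p - 1) with hc
  have hc0 : 0 < c := Real.rpow_pos_of_pos hτ0 _
  set a := ∫ x, f x ^ p ∂ν with ha
  have hac : 384 * a ≤ t * c := by
    have : t * c = t ^ p * (m : ℝ) ^ (p - 1) := by
      rw [hc, hτ, Real.mul_rpow hm'.le ht.le, Real.rpow_sub_one ht.ne' p]
      field_simp
    linarith
  set g : 𝒳 → ℝ := fun x => min (f x) τ with hg
  have hg0 : ∀ x, 0 ≤ g x := fun x => le_min (hf0 x) hτ0.le
  have hgτ : ∀ x, g x ≤ τ := fun x => min_le_right _ _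
  have hgf : ∀ x, g x ≤ f x := fun x => min_le_left _ _
  have hgm : Measurable g := hfm.min measurable_const
  have hgL : ∀ q, MemLp g q ν := fun q =>
    MemLp.of_bound (p := q) hgm.aestronglyMeasurable τ
      (Filter.Eventually.of_forall fun x => by
        rw [Real.norm_eq_abs, abs_of_nonneg (hg0 x)]; exact hgτ x)
  have hgi : Integrable g ν := memLp_one_iff_integrable.1 (hgL 1)
  have htail : ∀ x, f x - g x ≤ f x ^ p / c := by
    intro x
    rw [le_div_iff₀ hc0]
    rcases le_total (f x) τ with h | h
    · have : g x = f x := min_eq_left h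
      rw [this, sub_self, zero_mul]
      exact Real.rpow_nonneg (hf0 x) _
    · have hpos : 0 < f x := hτ0.trans_le h
      have h1 : f x ^ p = f x * f x ^ (p - 1) := by
        rw [Real.rpow_sub_one hpos.ne']; field_simp
      have h2 : c ≤ f x ^ (p - 1) := Real.rpow_le_rpow hτ0.le h (by linarith)
      rw [h1]
      exact mul_le_mul (by linarith [hg0 x]) h2 hc0.le hpos.le
  have hsq : ∀ x, g x ^ 2 ≤ τ / c * f x ^ p := by
    intro x
    have key : ∀ y, 0 ≤ y → y ≤ τ → y ^ 2 ≤ τ / c * y ^ p := by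
      intro y hy hyτ
      have h1 : τ / c = τ ^ (2 - p) := by
        rw [hc, show 2 - p = 1 - (p - 1) by ring, Real.rpow_sub hτ0 1 (p - 1), Real.rpow_one]
      rcases hy.eq_or_lt with rfl | hy
      · rw [Real.zero_rpow (by linarith)]; simp
      · calc y ^ 2 = y ^ (2 - p) * y ^ p := by
              rw [← Real.rpow_add hy]; norm_num
          _ ≤ τ / c * y ^ p := by
              rw [h1]
              gcongr
    refine (key _ (hg0 x) (hgτ x)).trans ?_
    have := hg0 x
    have := hgf x
    gcongr
  have hE : ∫ x, (f x - g x) ∂ν ≤ t / 384 := by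
    calc ∫ x, (f x - g x) ∂ν ≤ ∫ x, f x ^ p / c ∂ν :=
          integral_mono (hfi.sub hgi) (hfp.div_const c) htail
      _ = a / c := integral_div _ _
      _ ≤ t / 384 := by rw [div_le_iff₀ hc0]; linarith
  have hV : ProbabilityTheory.variance g ν ≤ m * t ^ 2 / 384 := by
    refine (ProbabilityTheory.variance_le_expectation_sq hgm.aestronglyMeasurable).trans ?_
    calc ∫ x, (g ^ 2) x ∂ν ≤ ∫ x, τ / c * f x ^ p ∂ν :=
          integral_mono (hgL 2).integrable_sq (hfp.const_mul _) hsq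
      _ = τ * (a / c) := by rw [integral_const_mul]; ring
      _ ≤ τ * (t / 384) := by
          refine mul_le_mul_of_nonneg_left ?_ hτ0.le
          rw [div_le_iff₀ hc0]; linarith
      _ = _ := by rw [hτ]; ring
  -- Chebyshev's inequality for the truncated function
  have hcheb : (Measure.pi fun _ : Fin m => ν)
      {x | m * t / 2 ≤ |(∑ j, g (x j)) - m * ∫ z, g z ∂ν|} ≤ ENNReal.ofReal (1 / 96) := by
    have hgj : ∀ j : Fin m, MemLp (fun x : Fin m → 𝒳 => g (x j)) 2
        (Measure.pi fun _ : Fin m => ν) := fun j =>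
      (hgL 2).comp_measurePreserving (measurePreserving_eval (fun _ : Fin m => ν) j)
    have hsum : MemLp (∑ j, fun x : Fin m → 𝒳 => g (x j)) 2 (Measure.pi fun _ : Fin m => ν) :=
      memLp_finsetSum' _ fun j _ => hgj j
    have hvar := ProbabilityTheory.variance_sum_pi (μ := fun _ : Fin m => ν)
      (X := fun _ => g) fun _ => hgL 2
    have hexp : ∫ x, (∑ j, fun x : Fin m → 𝒳 => g (x j)) x ∂(Measure.pi fun _ : Fin m => ν)
        = m * ∫ z, g z ∂ν := by
      simp only [Finset.sum_apply]
      rw [integral_finsetSum _ fun j _ => (hgj j).integrable (by norm_num)]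
      have : ∀ j : Fin m, ∫ x, g (x j) ∂(Measure.pi fun _ : Fin m => ν) = ∫ x, g x ∂ν := fun j =>
        integral_comp_eval (μ := fun _ : Fin m => ν) hgm.aestronglyMeasurable
      simp [this]
    have := ProbabilityTheory.meas_ge_le_variance_div_sq hsum (c := m * t / 2) (by positivity)
    rw [hexp, hvar] at this
    simp only [Finset.sum_apply] at this
    refine this.trans (ENNReal.ofReal_le_ofReal ?_)
    simp only [Finset.sum_const, Finset.card_univ, Fintype.card_fin, nsmul_eq_mul]
    rw [div_le_iff₀ (by positivity)]
    calc (m : ℝ) * ProbabilityTheory.variance g ν ≤ m * (m * t ^ 2 / 384) := by gcongr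
      _ = _ := by ring
  have hmark := measure_le_blockMean_le ν hm (fun x => f x - g x)
    (fun x => sub_nonneg.2 (hgf x)) (hfi.sub hgi) (t / 4) (1 / 96) (by positivity)
    (hE.trans (by linarith))
  have hsub : {x : Fin m → 𝒳 | ¬ |blockMean f x - ∫ z, f z ∂ν| ≤ t} ⊆
      {x | t / 4 ≤ blockMean (fun x => f x - g x) x} ∪
      {x | m * t / 2 ≤ |(∑ j, g (x j)) - m * ∫ z, g z ∂ν|} := by
    intro x hx
    by_contra hcon
    simp only [Set.mem_union, Set.mem_ofPred_eq, not_or, not_le] at hcon hx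
    obtain ⟨h1, h2⟩ := hcon
    have e1 : blockMean (fun x => f x - g x) x = blockMean f x - (∑ j, g (x j)) / m := by
      simp [blockMean, sub_div]
    have e2 : |(∑ j, g (x j)) / m - ∫ z, g z ∂ν| < t / 2 := by
      have : (∑ j, g (x j)) / m - ∫ z, g z ∂ν = ((∑ j, g (x j)) - m * ∫ z, g z ∂ν) / m := by
        field_simp
      rw [this, abs_div, abs_of_pos hm', div_lt_iff₀ hm']
      linarith
    have e3 : 0 ≤ blockMean (fun x => f x - g x) x :=
      div_nonneg (Finset.sum_nonneg fun j _ => sub_nonneg.2 (hgf _)) hm'.le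
    have e4 : 0 ≤ ∫ x, (f x - g x) ∂ν := integral_nonneg fun x => sub_nonneg.2 (hgf x)
    rw [integral_sub hfi hgi] at hE e4
    rw [e1] at h1 e3
    rw [abs_lt] at e2
    apply absurd hx
    rw [not_lt, abs_le]
    constructor <;> linarith
  calc _ ≤ _ := measure_mono hsub
    _ ≤ _ := measure_union_le _ _
    _ ≤ ENNReal.ofReal (1 / 96) + ENNReal.ofReal (1 / 96) := add_le_add hmark hcheb
    _ = _ := by rw [← ENNReal.ofReal_add (by norm_num) (by norm_num)]; norm_num

/-! ### A net of the Euclidean ball -/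

/-- The Euclidean ball of radius `W` has a `β`-net of cardinality at most `(6 W / β) ^ d`: a
maximal `β`-separated subset, whose cardinality is bounded by comparing volumes. -/
lemma exists_net (d : ℕ) (W β : ℝ) (hW : 0 < W) (hβ : 0 < β) (hβW : β ≤ W / 2) :
    ∃ s : Finset (EuclideanSpace ℝ (Fin d)), (∀ u ∈ s, ‖u‖ ≤ W) ∧
      (∀ w, ‖w‖ ≤ W → ∃ u ∈ s, ‖w - u‖ ≤ β) ∧ (s.card : ℝ) ≤ (6 * W / β) ^ d := by
  classical
  let Sep : Finset (EuclideanSpace ℝ (Fin d)) → Prop := fun s =>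
    (∀ u ∈ s, ‖u‖ ≤ W) ∧ ∀ u ∈ s, ∀ w ∈ s, u ≠ w → β ≤ ‖u - w‖
  have hcard : ∀ s, Sep s → (s.card : ℝ) ≤ (6 * W / β) ^ d := by
    rintro s ⟨hsW, hsep⟩
    let μ : Measure (EuclideanSpace ℝ (Fin d)) := volume
    have hdisj : Set.Pairwise (s : Set (EuclideanSpace ℝ (Fin d)))
        (Function.onFun Disjoint fun u => Metric.ball u (β / 2)) := by
      intro u hu w hw huw
      apply Metric.ball_disjoint_ball
      rw [dist_eq_norm]
      linarith [hsep u hu w hw huw]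
    have hsub : (⋃ u ∈ s, Metric.ball u (β / 2)) ⊆
        Metric.ball (0 : EuclideanSpace ℝ (Fin d)) (W + β / 2) := by
      refine Set.iUnion₂_subset fun u hu => Metric.ball_subset_ball' ?_
      rw [dist_zero_right]
      linarith [hsW u hu]
    have h1 : (s.card : ENNReal) * ENNReal.ofReal ((β / 2) ^ d) * μ (Metric.ball 0 1) ≤
        ENNReal.ofReal ((W + β / 2) ^ d) * μ (Metric.ball 0 1) := by
      have := measure_mono (μ := μ) hsub
      rw [measure_biUnion_finset hdisj fun u _ => measurableSet_ball,
        μ.addHaar_ball_of_pos _ (by positivity)] at this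
      simp only [μ.addHaar_ball_of_pos _ (half_pos hβ), finrank_euclideanSpace_fin,
        Finset.sum_const, nsmul_eq_mul] at this
      rwa [mul_assoc]
    have h2 := (ENNReal.mul_le_mul_iff_left
      (Metric.measure_ball_pos μ _ zero_lt_one).ne' measure_ball_lt_top.ne).1 h1
    have h3 : (s.card : ℝ) * (β / 2) ^ d ≤ (W + β / 2) ^ d := by
      have := ENNReal.toReal_le_of_le_ofReal (by positivity) h2
      rwa [ENNReal.toReal_mul, ENNReal.toReal_ofReal (by positivity),
        ENNReal.toReal_natCast] at this
    refine le_of_mul_le_mul_right (h3.trans ?_) (pow_pos (half_pos hβ) d)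
    rw [← mul_pow]
    apply pow_le_pow_left₀ (by positivity)
    have : 6 * W / β * (β / 2) = 3 * W := by field_simp; norm_num
    linarith
  -- a separated set of maximal cardinality
  let P : ℕ → Prop := fun n => ∃ s, Sep s ∧ s.card = n
  have hP0 : P 0 := ⟨∅, by simp [Sep], rfl⟩
  obtain ⟨s, hs, hsc⟩ : P (Nat.findGreatest P ⌊(6 * W / β) ^ d⌋₊) :=
    Nat.findGreatest_spec (Nat.zero_le _) hP0
  refine ⟨s, hs.1, fun w hw => ?_, hcard s hs⟩
  by_contra! hfar
  have hws : w ∉ s := fun h => by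
    have := hfar w h
    simp at this
    linarith
  have hins : Sep (insert w s) := by
    refine ⟨?_, ?_⟩
    · intro u hu
      rcases Finset.mem_insert.1 hu with rfl | hu
      · exact hw
      · exact hs.1 u hu
    · intro u hu u' hu' hne
      rcases Finset.mem_insert.1 hu with h | h <;> rcases Finset.mem_insert.1 hu' with h' | h'
      · exact absurd (h.trans h'.symm) hne
      · rw [h]; exact (hfar u' h').le
      · rw [h', norm_sub_rev]; exact (hfar u h).le
      · exact hs.2 u h u' h' hne
  have hle : (insert w s).card ≤ Nat.findGreatest P ⌊(6 * W / β) ^ d⌋₊ :=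
    Nat.le_findGreatest (Nat.le_floor (hcard _ hins)) ⟨_, hins, rfl⟩
  rw [Finset.card_insert_of_notMem hws] at hle
  omega

/-! ### Losses of linear predictors -/

/-- The loss `(x, y) ↦ ℓ(⟨w, x⟩ - y)` of the linear predictor with weight vector `w`. -/
def linLoss {d : ℕ} (ℓ : ℝ → ℝ) (w : EuclideanSpace ℝ (Fin d)) :
    EuclideanSpace ℝ (Fin d) × ℝ → ℝ :=
  fun z => ℓ ((∑ i, w i * z.1 i) - z.2)

lemma abs_sum_mul_le {d : ℕ} (w x : EuclideanSpace ℝ (Fin d)) :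
    |∑ i, w i * x i| ≤ ‖w‖ * ∑ i, |x i| := by
  rw [Finset.mul_sum]
  refine (Finset.abs_sum_le_sum_abs _ _).trans (Finset.sum_le_sum fun i _ => ?_)
  rw [abs_mul]
  gcongr
  simpa using PiLp.norm_apply_le w i

section Loss

variable {d : ℕ} {ℓ : ℝ → ℝ} {L : ℝ}

lemma lipschitz_const_nonneg (hlip : ∀ x y : ℝ, |ℓ x - ℓ y| ≤ L * |x - y|) : 0 ≤ L := by
  have := (abs_nonneg _).trans (hlip 1 0)
  simpa using this

lemma measurable_linLoss (hlip : ∀ x y : ℝ, |ℓ x - ℓ y| ≤ L * |x - y|)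
    (w : EuclideanSpace ℝ (Fin d)) : Measurable (linLoss ℓ w) := by
  have hL := lipschitz_const_nonneg hlip
  have hc : Continuous ℓ := (LipschitzWith.of_dist_le_mul (K := L.toNNReal) fun x y => by
    rw [Real.coe_toNNReal L hL, Real.dist_eq, Real.dist_eq]; exact hlip x y).continuous
  have : Continuous (linLoss ℓ w) := by
    unfold linLoss
    fun_prop
  exact this.measurable

lemma linLoss_le (hnn : ∀ t, 0 ≤ ℓ t) (hlip : ∀ x y : ℝ, |ℓ x - ℓ y| ≤ L * |x - y|)
    (hℓ0 : ℓ 0 = 0) (w : EuclideanSpace ℝ (Fin d)) (z : EuclideanSpace ℝ (Fin d) × ℝ) :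
    linLoss ℓ w z ≤ L * (|∑ i, w i * z.1 i| + |z.2|) := by
  have hL := lipschitz_const_nonneg hlip
  have h := hlip ((∑ i, w i * z.1 i) - z.2) 0
  rw [hℓ0, sub_zero, sub_zero, abs_of_nonneg (hnn _)] at h
  exact h.trans (mul_le_mul_of_nonneg_left (abs_sub _ _) hL)

lemma abs_linLoss_sub_le (hlip : ∀ x y : ℝ, |ℓ x - ℓ y| ≤ L * |x - y|)
    (w u : EuclideanSpace ℝ (Fin d)) (z : EuclideanSpace ℝ (Fin d) × ℝ) :
    |linLoss ℓ w z - linLoss ℓ u z| ≤ L * ‖w - u‖ * ∑ i, |z.1 i| := by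
  have hL := lipschitz_const_nonneg hlip
  refine (hlip _ _).trans ?_
  rw [mul_assoc]
  refine mul_le_mul_of_nonneg_left ?_ hL
  have : (∑ i, w i * z.1 i) - z.2 - ((∑ i, u i * z.1 i) - z.2) = ∑ i, (w - u) i * z.1 i := by
    simp [sub_mul]
  rw [this]
  exact abs_sum_mul_le _ _

variable {𝒟X : Measure (EuclideanSpace ℝ (Fin d))} [IsProbabilityMeasure 𝒟X]
  {𝒟Y : Measure ℝ} [IsProbabilityMeasure 𝒟Y]

lemma integrable_linLoss (hnn : ∀ t, 0 ≤ ℓ t) (hlip : ∀ x y : ℝ, |ℓ x - ℓ y| ≤ L * |x - y|)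
    (hℓ0 : ℓ 0 = 0) (hX1 : Integrable (fun x => ∑ i, |x i|) 𝒟X)
    (hY1 : Integrable (fun y => |y|) 𝒟Y) (w : EuclideanSpace ℝ (Fin d)) :
    Integrable (linLoss ℓ w) (𝒟X.prod 𝒟Y) := by
  have hL := lipschitz_const_nonneg hlip
  have hdom : Integrable (fun z : EuclideanSpace ℝ (Fin d) × ℝ =>
      L * (‖w‖ * (∑ i, |z.1 i|) + |z.2|)) (𝒟X.prod 𝒟Y) :=
    (((hX1.comp_fst 𝒟Y).const_mul ‖w‖).add (hY1.comp_snd 𝒟X)).const_mul L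
  refine hdom.mono' (measurable_linLoss hlip w).aestronglyMeasurable
    (Filter.Eventually.of_forall fun z => ?_)
  rw [Real.norm_eq_abs, abs_of_nonneg (show 0 ≤ linLoss ℓ w z from hnn _)]
  refine (linLoss_le hnn hlip hℓ0 w z).trans ?_
  have := abs_sum_mul_le w z.1
  gcongr

/-- The `p`-th moment of the loss of a linear predictor is finite, and at most `v / 2`, by
convexity of `t ↦ t ^ p`. -/
lemma linLoss_moment (hnn : ∀ t, 0 ≤ ℓ t) (hlip : ∀ x y : ℝ, |ℓ x - ℓ y| ≤ L * |x - y|)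
    (hℓ0 : ℓ 0 = 0) (p : ℝ) (hp1 : 1 < p) (v : ℝ) (w : EuclideanSpace ℝ (Fin d))
    (hXp : Integrable (fun x => |∑ i, w i * x i| ^ p) 𝒟X)
    (hYp : Integrable (fun y => |y| ^ p) 𝒟Y)
    (hv : (2 * L) ^ p * ((∫ x, |∑ i, w i * x i| ^ p ∂𝒟X) + ∫ y, |y| ^ p ∂𝒟Y) ≤ v) :
    Integrable (fun z => linLoss ℓ w z ^ p) (𝒟X.prod 𝒟Y) ∧
      ∫ z, linLoss ℓ w z ^ p ∂(𝒟X.prod 𝒟Y) ≤ v / 2 := by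
  have hL := lipschitz_const_nonneg hlip
  have hX' : Integrable (fun z : EuclideanSpace ℝ (Fin d) × ℝ => |∑ i, w i * z.1 i| ^ p)
      (𝒟X.prod 𝒟Y) := hXp.comp_fst 𝒟Y
  have hY' : Integrable (fun z : EuclideanSpace ℝ (Fin d) × ℝ => |z.2| ^ p)
      (𝒟X.prod 𝒟Y) := hYp.comp_snd 𝒟X
  have hdom : Integrable (fun z : EuclideanSpace ℝ (Fin d) × ℝ =>
      (2 * L) ^ p / 2 * (|∑ i, w i * z.1 i| ^ p + |z.2| ^ p)) (𝒟X.prod 𝒟Y) :=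
    (hX'.add hY').const_mul _
  have hpt : ∀ z, linLoss ℓ w z ^ p ≤
      (2 * L) ^ p / 2 * (|∑ i, w i * z.1 i| ^ p + |z.2| ^ p) := by
    intro z
    have hconv : (|∑ i, w i * z.1 i| + |z.2|) ^ p ≤
        2 ^ (p - 1) * (|∑ i, w i * z.1 i| ^ p + |z.2| ^ p) := by
      have := NNReal.rpow_add_le_mul_rpow_add_rpow
        (Real.nnabs (∑ i, w i * z.1 i)) (Real.nnabs z.2) hp1.le
      exact_mod_cast this
    calc linLoss ℓ w z ^ p ≤ (L * (|∑ i, w i * z.1 i| + |z.2|)) ^ p :=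
          Real.rpow_le_rpow (hnn _) (linLoss_le hnn hlip hℓ0 w z) (by linarith)
      _ = L ^ p * (|∑ i, w i * z.1 i| + |z.2|) ^ p := Real.mul_rpow hL (by positivity)
      _ ≤ L ^ p * (2 ^ (p - 1) * (|∑ i, w i * z.1 i| ^ p + |z.2| ^ p)) := by gcongr
      _ = _ := by
          rw [Real.mul_rpow (by norm_num) hL, Real.rpow_sub_one (by norm_num)]
          ring
  have hintegrable : Integrable (fun z => linLoss ℓ w z ^ p) (𝒟X.prod 𝒟Y) := by
    refine hdom.mono' ((measurable_linLoss hlip w).pow_const p).aestronglyMeasurable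
      (Filter.Eventually.of_forall fun z => ?_)
    rw [Real.norm_eq_abs, abs_of_nonneg (Real.rpow_nonneg (show 0 ≤ linLoss ℓ w z from hnn _) p)]
    exact hpt z
  refine ⟨hintegrable, (integral_mono hintegrable hdom hpt).trans ?_⟩
  rw [integral_const_mul, integral_add hX' hY',
    integral_fun_fst (fun x : EuclideanSpace ℝ (Fin d) => |∑ i, w i * x i| ^ p),
    integral_fun_snd (fun y : ℝ => |y| ^ p)]
  simp only [probReal_univ, one_smul]
  linarith

/-- Uniform convergence from a net `s` of the ball at scale `β`. The weight `w` is compared with a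
net point `u`; the comparison costs at most `L β T` on each block whose mean of `‖x‖₁` is below
`T`, so a single exceptional event controls the discretisation error of all `w` at once. -/
lemma uniform_of_net (hnn : ∀ t, 0 ≤ ℓ t) (hlip : ∀ x y : ℝ, |ℓ x - ℓ y| ≤ L * |x - y|)
    (hℓ0 : ℓ 0 = 0) (W : ℝ) (hX1 : Integrable (fun x => ∑ i, |x i|) 𝒟X)
    (hY1 : Integrable (fun y => |y|) 𝒟Y)
    (p : ℝ) (hp1 : 1 < p) (hp2 : p ≤ 2) (ε δ : ℝ) (hε : 0 < ε) (hδ0 : 0 < δ)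
    (m κ : ℕ) (hm : 0 < m)
    (hmom : ∀ w : EuclideanSpace ℝ (Fin d), ‖w‖ ≤ W →
      Integrable (fun z => linLoss ℓ w z ^ p) (𝒟X.prod 𝒟Y) ∧
      384 * ∫ z, linLoss ℓ w z ^ p ∂(𝒟X.prod 𝒟Y) ≤ (ε / 2) ^ p * (m : ℝ) ^ (p - 1))
    (s : Finset (EuclideanSpace ℝ (Fin d))) (β T : ℝ) (hsW : ∀ u ∈ s, ‖u‖ ≤ W)
    (hs : ∀ w, ‖w‖ ≤ W → ∃ u ∈ s, ‖w - u‖ ≤ β)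
    (hT : 0 < T) (hTX : 48 * ∫ x, ∑ i, |x i| ∂𝒟X ≤ T) (hβT : L * β * T ≤ ε / 4)
    (hκ : Real.exp (-(κ / 4)) ≤ δ / 2) (hκs : s.card * Real.exp (-(κ / 4)) ≤ δ / 2) :
    ENNReal.ofReal (1 - δ) ≤
      (Measure.pi fun _ : Fin κ => Measure.pi fun _ : Fin m => 𝒟X.prod 𝒟Y)
        {Z | ∀ f ∈ linRegClass d ℓ W, |mom f Z - ∫ z, f z ∂(𝒟X.prod 𝒟Y)| ≤ ε} := by
  classical
  have hL := lipschitz_const_nonneg hlip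
  have hm' : (0 : ℝ) < m := by exact_mod_cast hm
  set ν := 𝒟X.prod 𝒟Y with hν
  set μ := Measure.pi fun _ : Fin m => ν with hμ
  let h : EuclideanSpace ℝ (Fin d) × ℝ → ℝ := fun z => ∑ i, |z.1 i|
  have hh0 : ∀ z, 0 ≤ h z := fun z => Finset.sum_nonneg fun i _ => abs_nonneg _
  have hhi : Integrable h ν := hX1.comp_fst 𝒟Y
  have hhE : ∫ z, h z ∂ν = ∫ x, ∑ i, |x i| ∂𝒟X := by
    have := integral_fun_fst (μ := 𝒟X) (ν := 𝒟Y)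
      (fun x : EuclideanSpace ℝ (Fin d) => ∑ i, |x i|)
    simpa using this
  let A : Set (Fin m → EuclideanSpace ℝ (Fin d) × ℝ) := {x | T ≤ blockMean h x}
  let B : EuclideanSpace ℝ (Fin d) → Set (Fin m → EuclideanSpace ℝ (Fin d) × ℝ) := fun u =>
    {x | ¬ |blockMean (linLoss ℓ u) x - ∫ z, linLoss ℓ u z ∂ν| ≤ ε / 2}
  have hA : μ A ≤ ENNReal.ofReal (1 / 48) :=
    measure_le_blockMean_le ν hm h hh0 hhi T (1 / 48) hT (by rw [hhE]; linarith)
  have hB : ∀ u ∈ s, μ (B u) ≤ ENNReal.ofReal (1 / 48) := fun u hu =>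
    measure_blockMean_deviation_le ν hm (linLoss ℓ u) (fun z => hnn _)
      (measurable_linLoss hlip u) (integrable_linLoss hnn hlip hℓ0 hX1 hY1 u) p hp1 hp2
      (hmom u (hsW u hu)).1 (ε / 2) (by positivity) (hmom u (hsW u hu)).2
  let bad : Set (Fin m → EuclideanSpace ℝ (Fin d) × ℝ) →
      Set (Fin κ → Fin m → EuclideanSpace ℝ (Fin d) × ℝ) := fun C =>
    {Z | κ ≤ 4 * (Finset.univ.filter fun i => Z i ∈ C).card}
  set G := {Z : Fin κ → Fin m → EuclideanSpace ℝ (Fin d) × ℝ |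
    ∀ f ∈ linRegClass d ℓ W, |mom f Z - ∫ z, f z ∂ν| ≤ ε} with hG
  have hsub : Gᶜ ⊆ bad A ∪ ⋃ u ∈ s, bad (B u) := by
    intro Z hZ
    by_contra hcon
    apply hZ
    simp only [Set.mem_union, Set.mem_iUnion, not_or, not_exists] at hcon
    obtain ⟨hcA, hcB⟩ := hcon
    rintro f ⟨w, hw, rfl⟩
    obtain ⟨u, hu, hwu⟩ := hs w hw
    let cnt : Set (Fin m → EuclideanSpace ℝ (Fin d) × ℝ) → ℕ := fun C =>
      (Finset.univ.filter fun i => Z i ∈ C).card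
    have hcA' : 4 * cnt A < κ := not_le.1 hcA
    have hcB' : 4 * cnt (B u) < κ := not_le.1 (hcB u hu)
    refine abs_median_sub_le _ _ _ ?_
    -- a block outside `A` and `B u` has its mean within `ε` of the expectation
    have hgood : ∀ x, x ∉ A → x ∉ B u →
        |blockMean (linLoss ℓ w) x - ∫ z, linLoss ℓ w z ∂ν| ≤ ε := by
      intro x hxA hxB
      have hxA' : blockMean h x < T := not_le.1 hxA
      have hxB' : |blockMean (linLoss ℓ u) x - ∫ z, linLoss ℓ u z ∂ν| ≤ ε / 2 := not_not.1 hxB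
      have hβ0 : 0 ≤ β := (norm_nonneg _).trans hwu
      have hpt : ∀ z, |linLoss ℓ w z - linLoss ℓ u z| ≤ L * β * h z := fun z =>
        (abs_linLoss_sub_le hlip w u z).trans (by
          have := hh0 z
          change L * ‖w - u‖ * h z ≤ L * β * h z
          gcongr)
      have h1 : |blockMean (linLoss ℓ w) x - blockMean (linLoss ℓ u) x| ≤ ε / 4 := by
        calc |blockMean (linLoss ℓ w) x - blockMean (linLoss ℓ u) x|
            = |∑ j, (linLoss ℓ w (x j) - linLoss ℓ u (x j))| / m := by
              unfold blockMean
              rw [← sub_div, ← Finset.sum_sub_distrib, abs_div, abs_of_pos hm']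
          _ ≤ (∑ j, L * β * h (x j)) / m := by
              gcongr
              exact (Finset.abs_sum_le_sum_abs _ _).trans (Finset.sum_le_sum fun j _ => hpt _)
          _ = L * β * blockMean h x := by
              unfold blockMean
              rw [← Finset.mul_sum, mul_div_assoc]
          _ ≤ L * β * T := by gcongr
          _ ≤ ε / 4 := hβT
      have hiw := integrable_linLoss hnn hlip hℓ0 hX1 hY1 w
      have hiu := integrable_linLoss hnn hlip hℓ0 hX1 hY1 u
      have h2 : |∫ z, linLoss ℓ w z ∂ν - ∫ z, linLoss ℓ u z ∂ν| ≤ ε / 4 := by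
        rw [← integral_sub hiw hiu]
        calc |∫ z, (linLoss ℓ w z - linLoss ℓ u z) ∂ν|
            ≤ ∫ z, |linLoss ℓ w z - linLoss ℓ u z| ∂ν := abs_integral_le_integral_abs
          _ ≤ ∫ z, L * β * h z ∂ν :=
              integral_mono (hiw.sub hiu).abs (hhi.const_mul _) hpt
          _ = L * β * ∫ z, h z ∂ν := integral_const_mul _ _
          _ ≤ L * β * T := by
              have : 0 ≤ ∫ z, h z ∂ν := integral_nonneg hh0
              have : ∫ z, h z ∂ν ≤ T := by rw [hhE] at this ⊢; linarith
              gcongr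
          _ ≤ ε / 4 := hβT
      rw [abs_le] at h1 h2 hxB' ⊢
      constructor <;> linarith [h1.1, h1.2, h2.1, h2.2, hxB'.1, hxB'.2]
    have hcard : (Finset.univ.filter fun i =>
        ¬ |blockMean (linLoss ℓ w) (Z i) - ∫ z, linLoss ℓ w z ∂ν| ≤ ε).card ≤
        cnt A + cnt (B u) := by
      refine (Finset.card_le_card ?_).trans (Finset.card_union_le _ _)
      intro i hi
      simp only [Finset.mem_filter, Finset.mem_univ, true_and, Finset.mem_union] at hi ⊢
      by_contra hcon
      rw [not_or] at hcon
      exact hi (hgood _ hcon.1 hcon.2)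
    change 2 * (Finset.univ.filter fun i =>
        ¬ |blockMean (linLoss ℓ w) (Z i) - ∫ z, linLoss ℓ w z ∂ν| ≤ ε).card < κ
    omega
  have hbad : (Measure.pi fun _ : Fin κ => μ) Gᶜ ≤ ENNReal.ofReal δ := by
    calc (Measure.pi fun _ : Fin κ => μ) Gᶜ
        ≤ (Measure.pi fun _ : Fin κ => μ) (bad A) +
          ∑ u ∈ s, (Measure.pi fun _ : Fin κ => μ) (bad (B u)) :=
          (measure_mono hsub).trans ((measure_union_le _ _).trans
            (add_le_add le_rfl (measure_biUnion_finset_le _ _)))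
      _ ≤ ENNReal.ofReal (Real.exp (-(κ / 4))) +
          ∑ u ∈ s, ENNReal.ofReal (Real.exp (-(κ / 4))) :=
          add_le_add (measure_quarter_bad_le μ κ A hA)
            (Finset.sum_le_sum fun u hu => measure_quarter_bad_le μ κ (B u) (hB u hu))
      _ = ENNReal.ofReal (Real.exp (-(κ / 4)) + s.card * Real.exp (-(κ / 4))) := by
          rw [ENNReal.ofReal_add (by positivity) (by positivity), Finset.sum_const,
            nsmul_eq_mul, ENNReal.ofReal_mul (by positivity), ENNReal.ofReal_natCast]
      _ ≤ ENNReal.ofReal δ := ENNReal.ofReal_le_ofReal (by linarith)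
  -- subadditivity suffices here, so measurability of `G` plays no role
  have htot : (1 : ENNReal) ≤ (Measure.pi fun _ : Fin κ => μ) G + ENNReal.ofReal δ := by
    calc (1 : ENNReal) = (Measure.pi fun _ : Fin κ => μ) (G ∪ Gᶜ) := by
          rw [Set.union_compl_self, measure_univ]
      _ ≤ _ := (measure_union_le _ _).trans (add_le_add le_rfl hbad)
  rw [ENNReal.ofReal_sub _ hδ0.le, ENNReal.ofReal_one]
  exact tsub_le_iff_right.2 htot

end Loss

/-! ### The uniform bound -/

/-- Uniform MoM estimation for linear regression with an `L`-Lipschitz loss `ℓ` with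
`ℓ(0) = 0`: with probability at least `1 - δ` over `Z ∼ (𝒟^m)^κ`, `𝒟 = 𝒟_X × 𝒟_Y`,
every `f ∈ ℱ_W` satisfies `|MoM(f,Z) - E[f]| ≤ ε`. -/
theorem regression_mom_uniform_convergence_lipschitz (d : ℕ) (ℓ : ℝ → ℝ) (L : ℝ)
    (hnn : ∀ t, 0 ≤ ℓ t) (hlip : ∀ x y : ℝ, |ℓ x - ℓ y| ≤ L * |x - y|) (hℓ0 : ℓ 0 = 0)
    (W : ℝ) (hW : 0 < W)
    (𝒟X : Measure (EuclideanSpace ℝ (Fin d))) [IsProbabilityMeasure 𝒟X]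
    (𝒟Y : Measure ℝ) [IsProbabilityMeasure 𝒟Y]
    (hX1 : Integrable (fun x => ∑ i, |x i|) 𝒟X)
    (hY1 : Integrable (fun y => |y|) 𝒟Y)
    (p : ℝ) (hp1 : 1 < p) (hp2 : p ≤ 2)
    (v : ℝ)
    (hXp : ∀ w : EuclideanSpace ℝ (Fin d), ‖w‖ ≤ W →
      Integrable (fun x => |∑ i, w i * x i| ^ p) 𝒟X)
    (hYp : Integrable (fun y => |y| ^ p) 𝒟Y)
    (hv : ∀ w : EuclideanSpace ℝ (Fin d), ‖w‖ ≤ W →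
      (2 * L) ^ p * ((∫ x, |∑ i, w i * x i| ^ p ∂𝒟X) + ∫ y, |y| ^ p ∂𝒟Y) ≤ v)
    (ε δ : ℝ) (hε : 0 < ε) (hδ0 : 0 < δ) (hδ1 : δ < 1)
    (m κ : ℕ)
    (hm : (400 * (16 : ℝ) ^ p * v / ε ^ p) ^ (1 / (p - 1)) ≤ (m : ℝ))
    (hκ0 : 4 * 1250 ^ 2 * Real.log (Real.exp 1 / (δ / 8)) ≤ (κ : ℝ))
    (hκ1 : 10 ^ 6 * Real.log 2 / 99 ≤ (κ : ℝ))
    (hκ2 : 50 * Real.log (8 *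
        ((6 * W / min (W / 2)
            ((ε / 16) /
              (60000 * L * ((∫ x, ∑ i, |x i| ∂𝒟X) + ∫ y, |y| ∂𝒟Y) * m))) ^ d) / δ)
      ≤ (κ : ℝ)) :
    ENNReal.ofReal (1 - δ) ≤
      (Measure.pi fun _ : Fin κ => Measure.pi fun _ : Fin m => 𝒟X.prod 𝒟Y)
        {Z | ∀ f ∈ linRegClass d ℓ W, |mom f Z - ∫ z, f z ∂(𝒟X.prod 𝒟Y)| ≤ ε} := by
  have hL : 0 ≤ L := lipschitz_const_nonneg hlip
  set SX := ∫ x, ∑ i, |x i| ∂𝒟X with hSX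
  set SY := ∫ y, |y| ∂𝒟Y with hSY
  have hSX0 : 0 ≤ SX := integral_nonneg fun x => Finset.sum_nonneg fun i _ => abs_nonneg _
  have hSY0 : 0 ≤ SY := integral_nonneg fun y => abs_nonneg _
  have hmomv : ∀ w : EuclideanSpace ℝ (Fin d), ‖w‖ ≤ W →
      Integrable (fun z => linLoss ℓ w z ^ p) (𝒟X.prod 𝒟Y) ∧
      ∫ z, linLoss ℓ w z ^ p ∂(𝒟X.prod 𝒟Y) ≤ v / 2 := fun w hw =>
    linLoss_moment hnn hlip hℓ0 p hp1 v w (hXp w hw) hYp (hv w hw)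
  have hv0 : 0 ≤ v := by
    have h1 := (hmomv 0 (by simpa using hW.le)).2
    have h2 : 0 ≤ ∫ z, linLoss ℓ (0 : EuclideanSpace ℝ (Fin d)) z ^ p ∂(𝒟X.prod 𝒟Y) :=
      integral_nonneg fun z => Real.rpow_nonneg (hnn _) _
    linarith
  have hεp : 0 < ε ^ p := Real.rpow_pos_of_pos hε p
  have hm2 : 400 * (16 : ℝ) ^ p * v ≤ ε ^ p * (m : ℝ) ^ (p - 1) := by
    have h1 : 0 ≤ 400 * (16 : ℝ) ^ p * v / ε ^ p := by positivity
    have h2 := Real.rpow_le_rpow (Real.rpow_nonneg h1 _) hm (show 0 ≤ p - 1 by linarith)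
    rw [← Real.rpow_mul h1, one_div_mul_cancel (by linarith), Real.rpow_one,
      div_le_iff₀ hεp] at h2
    linarith
  have hκpos : Real.exp (-(κ / 4)) ≤ δ / 2 := by
    have h1 : Real.log (Real.exp 1 / (δ / 8)) ≤ κ / 4 := by
      have : (0 : ℝ) ≤ κ := Nat.cast_nonneg κ
      linarith
    rw [Real.log_le_iff_le_exp (by positivity), div_le_iff₀ (by positivity)] at h1
    rw [Real.exp_neg, inv_le_comm₀ (Real.exp_pos _) (by positivity)]
    rw [← one_div, div_le_iff₀ (by positivity)]
    have h2 : 1 ≤ Real.exp 1 := Real.one_le_exp (by norm_num)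
    nlinarith [Real.exp_pos ((κ : ℝ) / 4)]
  rcases Nat.eq_zero_or_pos m with rfl | hm0
  · -- an empty block forces `v = 0`, so every loss in the class vanishes almost everywhere
    have hv00 : v = 0 := by
      rw [Nat.cast_zero, Real.zero_rpow (by linarith), mul_zero] at hm2
      have : 0 < 400 * (16 : ℝ) ^ p := by positivity
      nlinarith
    have hall : {Z : Fin κ → Fin 0 → EuclideanSpace ℝ (Fin d) × ℝ | ∀ f ∈ linRegClass d ℓ W,
        |mom f Z - ∫ z, f z ∂(𝒟X.prod 𝒟Y)| ≤ ε} = Set.univ := by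
      refine Set.eq_univ_of_forall fun Z => ?_
      rintro f ⟨w, hw, rfl⟩
      change |mom (linLoss ℓ w) Z - ∫ z, linLoss ℓ w z ∂(𝒟X.prod 𝒟Y)| ≤ ε
      obtain ⟨hi, hle⟩ := hmomv w hw
      have hnn' : ∀ z, 0 ≤ linLoss ℓ w z ^ p := fun z => Real.rpow_nonneg (hnn _) _
      have hz : ∫ z, linLoss ℓ w z ^ p ∂(𝒟X.prod 𝒟Y) = 0 :=
        le_antisymm (by rw [hv00] at hle; simpa using hle) (integral_nonneg hnn')
      rw [integral_eq_zero_iff_of_nonneg hnn' hi] at hz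
      have hz' : ∫ z, linLoss ℓ w z ∂(𝒟X.prod 𝒟Y) = 0 := by
        refine integral_eq_zero_of_ae (hz.mono fun z h => ?_)
        exact (Real.rpow_eq_zero (hnn _) (by linarith)).1 h
      rw [hz']
      have hκ' : 0 < κ := by
        rcases Nat.eq_zero_or_pos κ with rfl | h
        · simp at hκpos
          linarith
        · exact h
      refine abs_median_sub_le _ 0 ε ?_
      simpa [blockMean, hε.le] using hκ'
    rw [hall, measure_univ]
    exact ENNReal.ofReal_le_one.2 (by linarith)
  · have hm' : (0 : ℝ) < m := by exact_mod_cast hm0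
    have hmom : ∀ w : EuclideanSpace ℝ (Fin d), ‖w‖ ≤ W →
        Integrable (fun z => linLoss ℓ w z ^ p) (𝒟X.prod 𝒟Y) ∧
        384 * ∫ z, linLoss ℓ w z ^ p ∂(𝒟X.prod 𝒟Y) ≤ (ε / 2) ^ p * (m : ℝ) ^ (p - 1) := by
      intro w hw
      refine ⟨(hmomv w hw).1, ?_⟩
      have h1 := (hmomv w hw).2
      have h2 : (2 : ℝ) ^ p ≤ 16 ^ p := Real.rpow_le_rpow (by norm_num) (by norm_num) (by linarith)
      have h3 : (0 : ℝ) < 2 ^ p := by positivity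
      rw [Real.div_rpow hε.le (by norm_num), div_mul_eq_mul_div, le_div_iff₀ h3]
      calc 384 * (∫ z, linLoss ℓ w z ^ p ∂(𝒟X.prod 𝒟Y)) * 2 ^ p
          ≤ 384 * (v / 2) * 16 ^ p := by gcongr
        _ ≤ 400 * (16 : ℝ) ^ p * v := by
            have : 0 ≤ (16 : ℝ) ^ p * v := by positivity
            linarith
        _ ≤ _ := hm2
    rcases (mul_nonneg hL (add_nonneg hSX0 hSY0)).eq_or_lt with h0 | hpos
    · -- here the covering number in the hypothesis degenerates, but the net `{0}` is enough
      have hLSX : L * SX = 0 := le_antisymm (by nlinarith) (by positivity)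
      have hLW : 0 ≤ L * W := by positivity
      refine uniform_of_net hnn hlip hℓ0 W hX1 hY1 p hp1 hp2 ε δ hε hδ0 m κ hm0 hmom {0} W
        (48 * SX + ε / (4 * (L * W + 1))) ?_ ?_ (by positivity) ?_ ?_ hκpos ?_
      · simpa using hW.le
      · intro w hw
        exact ⟨0, by simp, by simpa using hw⟩
      · rw [← hSX]
        have : 0 < ε / (4 * (L * W + 1)) := by positivity
        linarith
      · have h1 : L * W * (48 * SX + ε / (4 * (L * W + 1)))
            = 48 * W * (L * SX) + (L * W) * (ε / (4 * (L * W + 1))) := by ring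
        rw [h1, hLSX, mul_zero, zero_add, mul_div_assoc', div_le_div_iff₀ (by positivity)
          (by norm_num)]
        nlinarith
      · simpa using hκpos
    · set M := 60000 * L * (SX + SY) * m with hM
      have hM0 : 0 < M := by
        have : M = 60000 * (L * (SX + SY)) * m := by rw [hM]; ring
        rw [this]; positivity
      set β := min (W / 2) (ε / 16 / M) with hβ
      have hβ0 : 0 < β := lt_min (by positivity) (by positivity)
      have hS : 0 < SX + SY := by
        rcases (add_nonneg hSX0 hSY0).eq_or_lt with h | h
        · rw [← h, mul_zero] at hpos
          exact absurd hpos (lt_irrefl _)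
        · exact h
      obtain ⟨s, hsW, hs, hcard⟩ := exists_net d W β hW hβ0 (min_le_left _ _)
      refine uniform_of_net hnn hlip hℓ0 W hX1 hY1 p hp1 hp2 ε δ hε hδ0 m κ hm0 hmom s β
        (48 * (SX + SY)) hsW hs (by positivity) ?_ ?_ hκpos ?_
      · rw [← hSX]; linarith
      · have h1 : β * M ≤ ε / 16 := by
          rw [← le_div_iff₀ hM0]
          exact min_le_right _ _
        have h2 : (1 : ℝ) ≤ m := by exact_mod_cast hm0
        have h3 : β * M = 60000 * (L * β * (SX + SY)) * m := by rw [hM]; ring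
        have h4 : 0 ≤ L * β * (SX + SY) := by positivity
        nlinarith
      · have hN : 0 < (6 * W / β) ^ d := by positivity
        have h1 : Real.log (8 * (6 * W / β) ^ d / δ) ≤ κ / 50 := by linarith
        rw [Real.log_le_iff_le_exp (by positivity), div_le_iff₀ hδ0] at h1
        have h2 : Real.exp (κ / 50) ≤ Real.exp (κ / 4) := by
          apply Real.exp_le_exp.2
          have : (0 : ℝ) ≤ κ := Nat.cast_nonneg κ
          linarith
        rw [Real.exp_neg, ← div_eq_mul_inv, div_le_iff₀ (Real.exp_pos _)]
        nlinarith
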